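/- Let d ≥ 3 and let v_1, …, v_{2d+2} be 2d+2 points in general position in ℝ^d (every d+1 of them affinely independent), partitioned into d parts L_1 = {v_1, v_2, v_3}, L_2 = {v_4, v_5, v_6}, and L_k = {v_{2k+1}, v_{2k+2}} for 3 ≤ k ≤ d. Then there exist disjoint sets U', W' ⊆ {v_1, …, v_{2d+2}} with |U'| = |W'| = d, |U' ∩ L_i| = 1 and |W' ∩ L_i| = 1 for every i with 1 ≤ i ≤ d, such that the convex hulls of U' and W' contain a common point in their relative (intrinsic) interiors. Equivalently, every d-dimensional rectilinear drawing of K_{2×3+(d-2)×2}^d contains at least one crossing pair of hyperedges. -/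

import Mathlib

/-- Part index (0-based) of the `j`-th vertex (0-based) of `K_{2×3+(d-2)×2}^d`:
vertices `0,1,2` form part `0`, vertices `3,4,5` form part `1`, and vertices
`2k, 2k+1` (for `k ≥ 3`) form part `k - 1`. -/
def partIdx (j : ℕ) : ℕ := if j < 3 then 0 else if j < 6 then 1 else j / 2 - 1

/-!
An affine dependency of a family of points provides a common point of the relative interiors of
two convex hulls: that of the points of positive weight and that of the points of negative weight.
In general position, the zeros of a nonzero dependency can be perturbed to arbitrary signs. It
therefore suffices to find a nonzero dependency which has, on every part, one nonnegative entry,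
one nonpositive entry, and zeros elsewhere.

To this end, fix one vertex in each of the parts of size two, together with all vertices of the
first triple. These `d + 1` points are affinely independent, so prescribed weights on the
remaining points extend uniquely to a dependency. Prescribe a weight of median zero on the second
triple, and zero on the points left over. The weights of median zero on a triple form a
topological plane, on which the median of the induced weights on the first triple is odd and
continuous; by the Borsuk–Ulam theorem in dimension one, it vanishes at some nonzero weight.
-/

open Finset Module Topology

section IntrinsicInterior

section OrderedField

variable {𝕜 ι E : Type*} [Field 𝕜] [LinearOrder 𝕜] [AddCommGroup E] [Module 𝕜 E]

theorem openSegment_subset_intrinsicInterior_of_convex [TopologicalSpace E]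
    [IsTopologicalAddGroup E] [ContinuousConstSMul 𝕜 E] {s : Set E} (hs : Convex 𝕜 s) {x y : E}
    (hx : x ∈ s) (hy : y ∈ intrinsicInterior 𝕜 s) : openSegment 𝕜 x y ⊆ intrinsicInterior 𝕜 s := by
  rintro _ ⟨a, t, ha, ht, hat, rfl⟩
  obtain ⟨y, hyint, rfl⟩ := mem_intrinsicInterior.1 hy
  let x' : affineSpan 𝕜 s := ⟨x, subset_affineSpan 𝕜 s hx⟩
  have : Nonempty (affineSpan 𝕜 s) := ⟨x'⟩
  have hcoe (p : affineSpan 𝕜 s) : (AffineMap.homothety x' t p : E) = a • x + t • (p : E) := by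
    rw [← sub_eq_of_eq_add hat.symm, AffineMap.homothety_apply]
    simp only [AffineSubspace.coe_vadd, SetLike.val_smul, AffineSubspace.coe_vsub, vsub_eq_sub,
      vadd_eq_add, x']
    module
  have hmaps : AffineMap.homothety x' t '' ((↑) ⁻¹' s) ⊆ ((↑) ⁻¹' s : Set (affineSpan 𝕜 s)) := by
    rintro _ ⟨p, hp, rfl⟩
    rw [Set.mem_preimage, hcoe]
    exact hs hx hp ha.le ht.le hat
  have : ContinuousConstSMul 𝕜 (affineSpan 𝕜 s).direction :=
    IsInducing.subtypeVal.continuousConstSMul id rfl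
  have hopen := AffineMap.homothety_isOpenMap x' t ht.ne'
  exact mem_intrinsicInterior.2 ⟨AffineMap.homothety x' t y,
    interior_mono hmaps (hopen.image_interior_subset _ ⟨y, hyint, rfl⟩), hcoe y⟩

theorem convexHull_range_eq_image_stdSimplex [IsStrictOrderedRing 𝕜] [Fintype ι] (v : ι → E) :
    convexHull 𝕜 (Set.range v) = Fintype.linearCombination 𝕜 v '' stdSimplex 𝕜 ι := by
  classical
  rw [← convexHull_basis_eq_stdSimplex, LinearMap.image_convexHull, ← Set.range_comp]
  congr 2
  ext i
  simp [Fintype.linearCombination_apply]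

end OrderedField

variable {ι E : Type*} [NormedAddCommGroup E] [NormedSpace ℝ E]

theorem exists_pos_lt_one_forall_mul_le [Finite ι] {w : ι → ℝ} (hw : ∀ i, 0 < w i) (u : ι → ℝ) :
    ∃ t, 0 < t ∧ t < 1 ∧ ∀ i, t * u i ≤ w i := by
  have hlim (i) : ∀ᶠ t in 𝓝[>] (0 : ℝ), t * u i ≤ w i := by
    have : Filter.Tendsto (fun t : ℝ => t * u i) (𝓝 0) (𝓝 0) := by
      simpa using (continuous_mul_const (u i)).tendsto 0
    exact (this.eventually_le_const (hw i)).filter_mono nhdsWithin_le_nhds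
  obtain ⟨t, ht, ht0, ht1⟩ := ((Filter.eventually_all.2 hlim).and (Ioo_mem_nhdsGT one_pos)).exists
  exact ⟨t, ht0, ht1, ht⟩

theorem sum_smul_mem_intrinsicInterior_convexHull_range [FiniteDimensional ℝ E] [Fintype ι]
    {v : ι → E} {w : ι → ℝ} (hw : ∀ i, 0 < w i) (hw1 : ∑ i, w i = 1) :
    ∑ i, w i • v i ∈ intrinsicInterior ℝ (convexHull ℝ (Set.range v)) := by
  have hconv := convex_convexHull ℝ (Set.range v)
  have hmem (i) : v i ∈ convexHull ℝ (Set.range v) := subset_convexHull ℝ _ ⟨i, rfl⟩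
  -- Continue the segment from a relative interior point through `∑ i, w i • v i`: as the weights
  -- `w` are positive, it does not leave the hull at once.
  obtain ⟨y, hy⟩ := Set.Nonempty.intrinsicInterior hconv
    ⟨_, hconv.sum_mem (fun i _ => (hw i).le) hw1 fun i _ => hmem i⟩
  obtain ⟨u, ⟨-, hu1⟩, rfl⟩ :=
    convexHull_range_eq_image_stdSimplex (𝕜 := ℝ) v ▸ intrinsicInterior_subset hy
  obtain ⟨t, ht0, ht1, ht⟩ := exists_pos_lt_one_forall_mul_le hw u
  have ht1' : 0 < 1 - t := sub_pos.2 ht1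
  have hz : ∑ i, ((w i - t * u i) / (1 - t)) • v i ∈ convexHull ℝ (Set.range v) := by
    refine hconv.sum_mem (fun i _ => div_nonneg (sub_nonneg.2 (ht i)) ht1'.le) ?_ fun i _ => hmem i
    rw [← sum_div, sum_sub_distrib, ← mul_sum, hw1, hu1, mul_one, div_self ht1'.ne']
  refine openSegment_subset_intrinsicInterior_of_convex hconv hz hy
    ⟨1 - t, t, ht1', ht0, sub_add_cancel _ _, ?_⟩
  simp only [Fintype.linearCombination_apply, smul_sum, smul_smul, ← sum_add_distrib, ← add_smul,
    mul_div_cancel₀ _ ht1'.ne', sub_add_cancel]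

end IntrinsicInterior

section Median

variable {α : Type*} [LinearOrder α]

/-- The median of a triple. It serves as a continuous odd function whose vanishing forces one entry
of the triple to be nonnegative, another one to be nonpositive and the third one to be zero. -/
def median (x : Fin 3 → α) : α := max (min (x 0) (x 1)) (min (max (x 0) (x 1)) (x 2))

theorem median_comp_perm (x : Fin 3 → α) (σ : Equiv.Perm (Fin 3)) :
    median (x ∘ σ) = median x := by
  fin_cases σ <;> simp [median, Equiv.swap_apply_def] <;> grind

theorem median_eq_of_monotone {x : Fin 3 → α} (hx : Monotone x) : median x = x 1 := by
  simp [median, hx (show 0 ≤ 1 by decide), hx (show 1 ≤ 2 by decide)]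

theorem exists_median_le_le_median (x : Fin 3 → α) :
    ∃ p q, p ≠ q ∧ median x ≤ x p ∧ x q ≤ median x ∧ ∀ j, j ≠ p → j ≠ q → x j = median x := by
  let σ := Tuple.sort x
  have hσ : Monotone (x ∘ σ) := Tuple.monotone_sort x
  have hmed : median x = x (σ 1) := (median_comp_perm x σ).symm.trans (median_eq_of_monotone hσ)
  refine ⟨σ 2, σ 0, σ.injective.ne (by decide), hmed ▸ hσ (by decide), hmed ▸ hσ (by decide),
    σ.forall_congr_right.1 fun j h2 h0 => ?_⟩
  have : j = 1 := by grind
  rw [hmed, this]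

theorem odd_median [AddCommGroup α] [IsOrderedAddMonoid α] :
    Function.Odd (median : (Fin 3 → α) → α) := by
  intro x
  simp only [median, Pi.neg_apply, min_neg_neg, max_neg_neg, neg_inj]
  rw [min_max_distrib_left, min_eq_right min_le_max, max_comm]

theorem median_sub_const [AddCommGroup α] [IsOrderedAddMonoid α] (x : Fin 3 → α) (c : α) :
    median (fun i => x i - c) = median x - c := by
  simp only [median, min_sub_sub_right, max_sub_sub_right]

@[fun_prop]
theorem continuous_median [TopologicalSpace α] [OrderClosedTopology α] :
    Continuous (median : (Fin 3 → α) → α) := by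
  unfold median
  fun_prop

/-- The one-dimensional Borsuk–Ulam theorem, for the punctured space instead of the circle. -/
theorem exists_ne_zero_apply_eq_zero_of_odd {F : Type*} [AddCommGroup F] [Module ℝ F]
    [TopologicalSpace F] [IsTopologicalAddGroup F] [ContinuousSMul ℝ F]
    (hF : 1 < Module.rank ℝ F) {f : F → ℝ} (hf : f.Odd) (hcont : ContinuousOn f {0}ᶜ) :
    ∃ x ≠ 0, f x = 0 := by
  have : Nontrivial F := (rank_pos_iff_nontrivial (R := ℝ)).1 (zero_lt_one.trans hF)
  obtain ⟨x, hx⟩ := exists_ne (0 : F)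
  have hconn : IsPreconnected ({0}ᶜ : Set F) :=
    (isConnected_compl_singleton_of_one_lt_rank hF 0).isPreconnected
  wlog h : f x ≤ 0 generalizing x
  · exact this (-x) (neg_ne_zero.2 hx) (by rw [hf]; linarith)
  exact hconn.intermediate_value hx (neg_ne_zero.2 hx) hcont ⟨h, by rw [hf]; linarith⟩

theorem exists_ne_zero_median_eq_zero_median_map_eq_zero (A : (Fin 3 → ℝ) →ₗ[ℝ] Fin 3 → ℝ) :
    ∃ x ≠ 0, median x = 0 ∧ median (A x) = 0 := by
  -- The triples of median zero are parametrised by the plane.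
  let φ (z : ℝ × ℝ) : Fin 3 → ℝ := fun i => ![z.1, z.2, 0] i - median ![z.1, z.2, 0]
  have hφ_odd : φ.Odd := by
    intro z
    have hneg : ![(-z).1, (-z).2, 0] = -![z.1, z.2, 0] := by simp
    ext i
    simp only [φ, hneg, odd_median _, Pi.neg_apply]
    ring
  have hφ_cont : Continuous φ := by
    fun_prop
  have hA : Continuous A := A.continuous_of_finiteDimensional
  obtain ⟨z, hz, hAz⟩ := exists_ne_zero_apply_eq_zero_of_odd (F := ℝ × ℝ)
    (by simp [one_add_one_eq_two]) (f := fun z => median (A (φ z)))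
    (fun z => by simp only [hφ_odd z, map_neg, odd_median _])
    (continuous_median.comp (hA.comp hφ_cont)).continuousOn
  refine ⟨φ z, fun h => hz ?_, (median_sub_const _ _).trans (sub_self _), hAz⟩
  have hmed : median ![z.1, z.2, 0] = 0 := by simpa [φ] using congrFun h 2
  ext
  · simpa [φ, hmed] using congrFun h 0
  · simpa [φ, hmed] using congrFun h 1

end Median

section AffineDependencies

variable {𝕜 ι E : Type*} [Field 𝕜] [AddCommGroup E] [Module 𝕜 E]

variable (𝕜) in
/-- General position of a family of points: any at most `finrank 𝕜 E + 1` of them are affinely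
independent. -/
def IsInGeneralPosition (v : ι → E) : Prop :=
  ∀ S : Finset ι, #S ≤ finrank 𝕜 E + 1 → AffineIndependent 𝕜 fun i : S => v i

theorem isInGeneralPosition_of_card_eq [Fintype ι] {v : ι → E}
    (hcard : finrank 𝕜 E + 1 ≤ Fintype.card ι)
    (hv : ∀ S : Finset ι, #S = finrank 𝕜 E + 1 → AffineIndependent 𝕜 fun i : S => v i) :
    IsInGeneralPosition 𝕜 v := by
  intro S hS
  obtain ⟨T, hST, hT⟩ := exists_superset_card_eq hS hcard
  exact (hv T hT).comp_embedding (Set.embeddingOfSubset _ _ (coe_subset.2 hST))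

variable [Fintype ι]

variable (𝕜) in
/-- The affine dependencies of a family of points `v`: the weights of sum zero whose weighted sum of
the points vanishes, encoded as the linear dependencies of the points lifted to height one. -/
def affineDependencies (v : ι → E) : Submodule 𝕜 (ι → 𝕜) :=
  LinearMap.ker (Fintype.linearCombination 𝕜 fun i => (v i, (1 : 𝕜)))

theorem mem_affineDependencies {v : ι → E} {l : ι → 𝕜} :
    l ∈ affineDependencies 𝕜 v ↔ ∑ i, l i • v i = 0 ∧ ∑ i, l i = 0 := by
  simp [affineDependencies, Fintype.linearCombination_apply, Prod.ext_iff, Prod.fst_sum,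
    Prod.snd_sum]

theorem eq_zero_of_mem_affineDependencies {v : ι → E} {S : Finset ι}
    (hS : AffineIndependent 𝕜 fun i : S => v i) {l : ι → 𝕜} (hl : l ∈ affineDependencies 𝕜 v)
    (hlS : ∀ i ∉ S, l i = 0) : l = 0 := by
  obtain ⟨hsum, hone⟩ := mem_affineDependencies.1 hl
  rw [← sum_subset S.subset_univ fun i _ hi => by simp [hlS i hi], ← sum_coe_sort] at hsum hone
  ext i
  by_cases hi : i ∈ S
  · exact affineIndependent_iff.1 hS univ (fun i => l i) hone hsum ⟨i, hi⟩ (mem_univ _)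
  · exact hlS i hi

theorem exists_linearMap_affineDependencies_eq_off [FiniteDimensional 𝕜 E] {v : ι → E}
    {S : Finset ι} (hS : AffineIndependent 𝕜 fun i : S => v i) (hcard : #S = finrank 𝕜 E + 1) :
    ∃ C : (ι → 𝕜) →ₗ[𝕜] affineDependencies 𝕜 v, ∀ x, ∀ i ∉ S, (C x : ι → 𝕜) i = x i := by
  let T := Fintype.linearCombination 𝕜 fun i => (v i, (1 : 𝕜))
  let e := Function.ExtendByZero.linearMap 𝕜 (Subtype.val : S → ι)
  have he (y : S → 𝕜) (i : ι) (hi : i ∉ S) : e y i = 0 :=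
    Function.extend_apply' _ _ _ fun ⟨j, hj⟩ => hi (hj ▸ j.2)
  have hinj : Function.Injective (T ∘ₗ e) := by
    refine (injective_iff_map_eq_zero _).2 fun y hy => funext fun j => ?_
    have hzero : e y = 0 := eq_zero_of_mem_affineDependencies hS hy (he y)
    exact (Subtype.val_injective.extend_apply y 0 j).symm.trans (congrFun hzero j)
  let Te : (S → 𝕜) ≃ₗ[𝕜] E × 𝕜 := .ofInjectiveOfFinrankEq (T ∘ₗ e) hinj (by simp [hcard])
  have hTe (z : E × 𝕜) : T (e (Te.symm z)) = z := Te.apply_symm_apply z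
  let C := LinearMap.id - e ∘ₗ Te.symm.toLinearMap ∘ₗ T
  refine ⟨C.codRestrict (affineDependencies 𝕜 v) fun x => LinearMap.mem_ker.2 ?_, fun x i hi => ?_⟩
  · change T (x - e (Te.symm (T x))) = 0
    rw [map_sub, hTe, sub_self]
  · change x i - e (Te.symm (T x)) i = x i
    rw [he _ i hi, sub_zero]

theorem IsInGeneralPosition.finrank_add_one_lt_card_support [DecidableEq 𝕜] {v : ι → E}
    (hv : IsInGeneralPosition 𝕜 v) {l : ι → 𝕜} (hl : l ∈ affineDependencies 𝕜 v) (hl0 : l ≠ 0) :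
    finrank 𝕜 E + 1 < #{i | l i ≠ 0} := by
  contrapose! hl0
  exact eq_zero_of_mem_affineDependencies (hv _ hl0) hl (by simp)

end AffineDependencies

section RealAffineDependencies

variable {ι E : Type*} [Fintype ι] [AddCommGroup E] [Module ℝ E] [FiniteDimensional ℝ E]

theorem exists_mem_affineDependencies_median_eq_zero {v : ι → E} {S : Finset ι}
    (hS : AffineIndependent ℝ fun i : S => v i) (hcard : #S = finrank ℝ E + 1)
    (α : Fin 3 → ι) (β : Fin 3 ↪ ι) (hβ : ∀ j, β j ∉ S) :
    ∃ l ∈ affineDependencies ℝ v, l ≠ 0 ∧ median (l ∘ α) = 0 ∧ median (l ∘ β) = 0 ∧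
      ∀ i ∉ S, i ∉ Set.range β → l i = 0 := by
  obtain ⟨C, hC⟩ := exists_linearMap_affineDependencies_eq_off hS hcard
  let e := Function.ExtendByZero.linearMap ℝ β
  let L := (affineDependencies ℝ v).subtype ∘ₗ C ∘ₗ e
  obtain ⟨x, hx, hxβ, hxα⟩ :=
    exists_ne_zero_median_eq_zero_median_map_eq_zero (LinearMap.funLeft ℝ ℝ α ∘ₗ L)
  have hLβ : L x ∘ β = x := by
    ext j
    exact (hC _ _ (hβ j)).trans (β.injective.extend_apply x 0 j)
  refine ⟨L x, (C (e x)).2, fun h => hx ?_, hxα, hLβ.symm ▸ hxβ, fun i hiS hiβ => ?_⟩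
  · rw [← hLβ, h, Pi.zero_comp]
  · exact (hC _ i hiS).trans (Function.extend_apply' _ _ _ hiβ)

theorem eventually_sign_add_mul (a b : ℝ) :
    ∀ᶠ ε in 𝓝[>] 0,
      SignType.sign (a + ε * b) = if a = 0 then SignType.sign b else SignType.sign a := by
  rcases eq_or_ne a 0 with rfl | ha
  · filter_upwards [self_mem_nhdsWithin] with ε hε
    simp [sign_mul, sign_pos (Set.mem_Ioi.1 hε)]
  · have hlim : Filter.Tendsto (fun ε => a + ε * b) (𝓝 0) (𝓝 a) := by
      have : Continuous fun ε => a + ε * b := by fun_prop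
      simpa using this.tendsto 0
    have hsign := (continuousAt_sign_of_ne_zero ha).tendsto.comp hlim
    rw [nhds_discrete SignType, Filter.tendsto_pure] at hsign
    filter_upwards [nhdsWithin_le_nhds hsign] with ε hε
    rw [if_neg ha]
    exact hε

theorem IsInGeneralPosition.exists_mem_affineDependencies_sign_eq {v : ι → E}
    (hv : IsInGeneralPosition ℝ v) {l : ι → ℝ} (hl : l ∈ affineDependencies ℝ v) (hl0 : l ≠ 0)
    (δ : ι → ℝ) :
    ∃ m ∈ affineDependencies ℝ v, ∀ i,
      SignType.sign (m i) = if l i = 0 then SignType.sign (δ i) else SignType.sign (l i) := by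
  obtain ⟨S, hSl, hS⟩ := exists_subset_card_eq (hv.finrank_add_one_lt_card_support hl hl0).le
  obtain ⟨C, hC⟩ := exists_linearMap_affineDependencies_eq_off (hv S hS.le) hS
  obtain ⟨ε, hε⟩ :=
    (Filter.eventually_all.2 fun i => eventually_sign_add_mul (l i) ((C δ : ι → ℝ) i)).exists
  refine ⟨l + ε • (C δ : ι → ℝ), add_mem hl (Submodule.smul_mem _ ε (C δ).2), fun i => ?_⟩
  refine (hε i).trans ?_
  split_ifs with hi
  · rw [hC δ i fun hiS => (mem_filter.1 (hSl hiS)).2 hi]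
  · rfl

end RealAffineDependencies

section Radon

variable {ι E : Type*} [NormedAddCommGroup E] [NormedSpace ℝ E] [FiniteDimensional ℝ E]

theorem centerMass_mem_intrinsicInterior_convexHull_image {v : ι → E} {w : ι → ℝ} {s : Finset ι}
    (hs : s.Nonempty) (hw : ∀ i ∈ s, 0 < w i) :
    s.centerMass w v ∈ intrinsicInterior ℝ (convexHull ℝ (v '' s)) := by
  have hpos : 0 < ∑ i ∈ s, w i := sum_pos hw hs
  rw [Set.image_eq_range, centerMass, smul_sum, ← sum_coe_sort s]
  simp only [smul_smul]
  refine sum_smul_mem_intrinsicInterior_convexHull_range (v := fun i : s => v i)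
    (fun i => mul_pos (inv_pos.2 hpos) (hw i i.2)) ?_
  rw [← mul_sum, sum_coe_sort s, inv_mul_cancel₀ hpos.ne']

theorem sum_filter_pos_add_sum_filter_neg {R M : Type*} [LinearOrder R] [Zero R]
    [AddCommMonoid M] [Fintype ι] {m : ι → R} {f : ι → M} (hf : ∀ i, m i = 0 → f i = 0) :
    ∑ i with 0 < m i, f i + ∑ i with m i < 0, f i = ∑ i, f i := by
  rw [sum_filter, sum_filter, ← sum_add_distrib]
  refine sum_congr rfl fun i _ => ?_
  rcases lt_trichotomy (m i) 0 with h | h | h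
  · simp [h, h.not_gt]
  · simp [h, hf i h]
  · simp [h, h.not_gt]

/-- Radon's theorem for relative interiors. -/
theorem nonempty_intrinsicInterior_inter_of_mem_affineDependencies [Fintype ι] {v : ι → E}
    {m : ι → ℝ} (hm : m ∈ affineDependencies ℝ v) (hm0 : m ≠ 0) :
    (intrinsicInterior ℝ (convexHull ℝ (v '' {i | 0 < m i})) ∩
      intrinsicInterior ℝ (convexHull ℝ (v '' {i | m i < 0}))).Nonempty := by
  obtain ⟨hsum, hone⟩ := mem_affineDependencies.1 hm
  obtain ⟨j, hj⟩ := Function.ne_iff.1 hm0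
  obtain ⟨i, -, hi⟩ := exists_pos_of_sum_zero_of_exists_nonzero m hone ⟨j, mem_univ j, hj⟩
  obtain ⟨k, -, hk⟩ := exists_pos_of_sum_zero_of_exists_nonzero (-m) (by simpa using hone)
    ⟨j, mem_univ j, neg_ne_zero.2 hj⟩
  let P : Finset ι := {i | 0 < m i}
  let N : Finset ι := {i | m i < 0}
  have hcenter : P.centerMass m v = N.centerMass (-m) v := by
    rw [centerMass_neg_left]
    exact centerMass_of_sum_add_sum_eq_zero
      ((sum_filter_pos_add_sum_filter_neg fun i hi => hi).trans hone)
      ((sum_filter_pos_add_sum_filter_neg fun i hi => by rw [hi, zero_smul]).trans hsum)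
  have hP : P.centerMass m v ∈ intrinsicInterior ℝ (convexHull ℝ (v '' P)) :=
    centerMass_mem_intrinsicInterior_convexHull_image ⟨i, by simpa [P]⟩ (by simp [P])
  have hN : N.centerMass (-m) v ∈ intrinsicInterior ℝ (convexHull ℝ (v '' N)) :=
    centerMass_mem_intrinsicInterior_convexHull_image ⟨k, by simpa [N] using hk⟩ (by simp [N])
  exact ⟨P.centerMass m v, by simpa [P] using hP, by simpa [N, hcenter] using hN⟩

theorem IsInGeneralPosition.nonempty_intrinsicInterior_inter [Fintype ι] {v : ι → E}
    (hv : IsInGeneralPosition ℝ v) {l : ι → ℝ} (hl : l ∈ affineDependencies ℝ v) (hl0 : l ≠ 0)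
    {U W : Finset ι} (hUW : Disjoint U W) (hU : ∀ i ∈ U, 0 ≤ l i) (hW : ∀ i ∈ W, l i ≤ 0)
    (hzero : ∀ i ∉ U, i ∉ W → l i = 0) :
    (intrinsicInterior ℝ (convexHull ℝ (v '' U)) ∩
      intrinsicInterior ℝ (convexHull ℝ (v '' W))).Nonempty := by
  classical
  obtain ⟨m, hm, hsign⟩ := hv.exists_mem_affineDependencies_sign_eq hl hl0
    fun i => if i ∈ U then 1 else if i ∈ W then -1 else 0
  have hpos (i) (hi : i ∈ U) : 0 < m i := by
    rw [← sign_eq_one_iff, hsign]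
    by_cases h : l i = 0
    · rw [if_pos h, if_pos hi, sign_one]
    · rw [if_neg h, sign_pos ((hU i hi).lt_of_ne' h)]
  have hneg (i) (hi : i ∈ W) : m i < 0 := by
    rw [← sign_eq_neg_one_iff, hsign]
    by_cases h : l i = 0
    · rw [if_pos h, if_neg (disjoint_right.1 hUW hi), if_pos hi, Left.sign_neg, sign_one]
    · rw [if_neg h, sign_neg (lt_of_le_of_ne (hW i hi) h)]
  have hnone (i) (hiU : i ∉ U) (hiW : i ∉ W) : m i = 0 := by
    rw [← sign_eq_zero_iff, hsign, if_pos (hzero i hiU hiW), if_neg hiU, if_neg hiW, sign_zero]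
  have hm0 : m ≠ 0 := by
    obtain ⟨i, hi : l i ≠ 0⟩ := Function.ne_iff.1 hl0
    have hsign_eq : SignType.sign (m i) = SignType.sign (l i) := (hsign i).trans (if_neg hi)
    exact fun h => hi (sign_eq_zero_iff.1 (by rw [← hsign_eq, h, Pi.zero_apply, sign_zero]))
  have hmU : {i | 0 < m i} = (U : Set ι) := by
    ext i
    grind
  have hmW : {i | m i < 0} = (W : Set ι) := by
    ext i
    grind
  exact hmU ▸ hmW ▸ nonempty_intrinsicInterior_inter_of_mem_affineDependencies hm hm0

end Radon

section Hyperedges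

variable {ι κ R : Type*} [LinearOrder R] [Zero R]

/-- A weight splits on a set of vertices if it is nonnegative at one of them, nonpositive at another
one and zero at all the others: the first two vertices can then go to two disjoint hyperedges, as
supports of the positive and the negative part of the weight. -/
def SplitsOn (l : ι → R) (s : Finset ι) : Prop :=
  ∃ p ∈ s, ∃ q ∈ s, p ≠ q ∧ 0 ≤ l p ∧ l q ≤ 0 ∧ ∀ j ∈ s, j ≠ p → j ≠ q → l j = 0

theorem splitsOn_of_forall_ne {l : ι → R} {s : Finset ι} (hs : s.Nontrivial) {r : ι} (hr : r ∈ s)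
    (hl : ∀ j ∈ s, j ≠ r → l j = 0) : SplitsOn l s := by
  obtain ⟨q, hq, hqr⟩ := hs.exists_ne r
  have hlq := hl q hq hqr
  rcases le_total 0 (l r) with h | h
  · exact ⟨r, hr, q, hq, hqr.symm, h, hlq.le, fun j hj hjr _ => hl j hj hjr⟩
  · exact ⟨q, hq, r, hr, hqr, hlq.ge, h, fun j hj _ hjr => hl j hj hjr⟩

theorem splitsOn_of_median_eq_zero {l : ι → R} {s : Finset ι} (γ : Fin 3 ↪ ι) (hγ : ∀ j, γ j ∈ s)
    (hmed : median (l ∘ γ) = 0) (hl : ∀ i ∈ s, i ∉ Set.range γ → l i = 0) : SplitsOn l s := by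
  obtain ⟨p, q, hpq, hp, hq, hmid⟩ := exists_median_le_le_median (l ∘ γ)
  rw [hmed] at hp hq hmid
  refine ⟨γ p, hγ p, γ q, hγ q, γ.injective.ne hpq, hp, hq, fun i hi hip hiq => ?_⟩
  by_cases hiγ : i ∈ Set.range γ
  · obtain ⟨j, rfl⟩ := hiγ
    exact hmid j (ne_of_apply_ne γ hip) (ne_of_apply_ne γ hiq)
  · exact hl i hi hiγ

variable [DecidableEq κ]

/-- The hyperedges of the complete `#K`-partite hypergraph with parts `{i | c i = k}`, `k ∈ K`. -/
def IsHyperedge (c : ι → κ) (K : Finset κ) (U : Finset ι) : Prop :=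
  #U = #K ∧ ∀ k ∈ K, #{i ∈ U | c i = k} = 1

theorem isHyperedge_image [DecidableEq ι] {c : ι → κ} {K : Finset κ} {p : K → ι}
    (hp : ∀ k, c (p k) = k) : IsHyperedge c K (univ.image p) := by
  have hinj : p.Injective := Function.Injective.of_comp (f := c)
    (by simpa only [Function.comp_def, hp] using Subtype.val_injective)
  refine ⟨by rw [card_image_of_injective _ hinj, card_univ, Fintype.card_coe], fun k hk => ?_⟩
  refine card_eq_one.2 ⟨p ⟨k, hk⟩, ?_⟩
  ext i
  simp only [mem_filter, mem_image, mem_univ, true_and, mem_singleton]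
  constructor
  · rintro ⟨⟨k, rfl⟩, rfl⟩
    simp [hp]
  · rintro rfl
    exact ⟨⟨_, rfl⟩, hp _⟩

theorem exists_embedding_fin_of_le_card [Fintype ι] {c : ι → κ} {k : κ} {n : ℕ}
    (h : n ≤ #{i | c i = k}) : ∃ f : Fin n ↪ ι, ∀ j, c (f j) = k := by
  obtain ⟨f⟩ := Function.Embedding.nonempty_of_card_le (α := Fin n) (β := {i // c i = k})
    (by rwa [Fintype.card_fin, Fintype.card_subtype])
  exact ⟨f.trans (.subtype _), fun j => (f j).2⟩

variable [Fintype ι] {E : Type*}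

theorem IsInGeneralPosition.exists_mem_affineDependencies_splitsOn [AddCommGroup E] [Module ℝ E]
    [FiniteDimensional ℝ E] {v : ι → E} (hv : IsInGeneralPosition ℝ v) {c : ι → κ} {K : Finset κ}
    (hK : #K = finrank ℝ E) {a b : κ} (ha : a ∈ K) (hb : b ∈ K) (hab : a ≠ b)
    (hca : 3 ≤ #{i | c i = a}) (hcb : 3 ≤ #{i | c i = b}) (hc : ∀ k ∈ K, 2 ≤ #{i | c i = k}) :
    ∃ l ∈ affineDependencies ℝ v, l ≠ 0 ∧ (∀ k ∈ K, SplitsOn l {i | c i = k}) ∧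
      ∀ i, c i ∉ K → l i = 0 := by
  classical
  obtain ⟨α, hα⟩ := exists_embedding_fin_of_le_card hca
  obtain ⟨β, hβ⟩ := exists_embedding_fin_of_le_card hcb
  have : Nonempty ι := ⟨α 0⟩
  have hrep (k) (hk : k ∈ K) : ∃ i, c i = k := by
    obtain ⟨i, hi⟩ := card_pos.1 (two_pos.trans_le (hc k hk))
    exact ⟨i, (mem_filter.1 hi).2⟩
  choose! r hr using hrep
  let S := univ.map α ∪ ((K.erase a).erase b).image r
  have hmem (i) : i ∈ S ↔ i ∈ Set.range α ∨ c i ∈ K ∧ c i ≠ a ∧ c i ≠ b ∧ i = r (c i) := by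
    grind
  have hS : #S = finrank ℝ E + 1 := by
    have hdisj : Disjoint (univ.map α) (((K.erase a).erase b).image r) := by
      simp only [disjoint_left, mem_map, mem_image]
      grind
    have hinj : Set.InjOn r ((K.erase a).erase b) := by
      intro k hk k' hk' h
      grind
    have hcard : 1 < #K := one_lt_card.2 ⟨a, ha, b, hb, hab⟩
    rw [card_union_of_disjoint hdisj, card_map, card_univ, Fintype.card_fin,
      card_image_of_injOn hinj, card_erase_of_mem (mem_erase.2 ⟨hab.symm, hb⟩),
      card_erase_of_mem ha]
    omega
  obtain ⟨l, hl, hl0, hlα, hlβ, hoff⟩ :=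
    exists_mem_affineDependencies_median_eq_zero (hv S hS.le) hS α β (by grind)
  refine ⟨l, hl, hl0, fun k hk => ?_, fun i hi => hoff i (by grind) (by grind)⟩
  obtain rfl | hka := eq_or_ne k a
  · exact splitsOn_of_median_eq_zero α (by simpa using hα) hlα (by grind)
  obtain rfl | hkb := eq_or_ne k b
  · exact splitsOn_of_median_eq_zero β (by simpa using hβ) hlβ (by grind)
  exact splitsOn_of_forall_ne (one_lt_card_iff_nontrivial.1 (hc k hk)) (r := r k)
    (by simp [hr k hk]) (by grind)

theorem exists_crossing_pair_general [NormedAddCommGroup E] [NormedSpace ℝ E]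
    [FiniteDimensional ℝ E] {v : ι → E} (hv : IsInGeneralPosition ℝ v) {c : ι → κ} {K : Finset κ}
    (hK : #K = finrank ℝ E) {a b : κ} (ha : a ∈ K) (hb : b ∈ K) (hab : a ≠ b)
    (hca : 3 ≤ #{i | c i = a}) (hcb : 3 ≤ #{i | c i = b}) (hc : ∀ k ∈ K, 2 ≤ #{i | c i = k}) :
    ∃ U W : Finset ι, Disjoint U W ∧ IsHyperedge c K U ∧ IsHyperedge c K W ∧
      (intrinsicInterior ℝ (convexHull ℝ (v '' U)) ∩
        intrinsicInterior ℝ (convexHull ℝ (v '' W))).Nonempty := by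
  classical
  obtain ⟨l, hl, hl0, hsplit, hoff⟩ :=
    hv.exists_mem_affineDependencies_splitsOn hK ha hb hab hca hcb hc
  choose p hp q hq hpq hlp hlq hzero using fun k : K => hsplit k k.2
  simp only [mem_filter, mem_univ, true_and] at hp hq hzero
  have hdisj : Disjoint (univ.image p) (univ.image q) := by
    simp only [disjoint_left, mem_image, mem_univ, true_and]
    rintro _ ⟨k, rfl⟩ ⟨k', hk'⟩
    have : k' = k := Subtype.ext (by rw [← hp k, ← hk', hq])
    exact hpq k (this ▸ hk').symm
  refine ⟨univ.image p, univ.image q, hdisj, isHyperedge_image hp, isHyperedge_image hq,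
    hv.nonempty_intrinsicInterior_inter hl hl0 hdisj (forall_mem_image.2 fun k _ => hlp k)
      (forall_mem_image.2 fun k _ => hlq k) fun i hip hiq => ?_⟩
  by_cases hi : c i ∈ K
  · exact hzero ⟨c i, hi⟩ i rfl (by grind) (by grind)
  · exact hoff i hi

end Hyperedges

theorem two_le_card_partIdx_eq {d k : ℕ} (hk : k < d) :
    2 ≤ #{j : Fin (2 * d + 2) | partIdx j = k} := by
  obtain rfl | hk0 := k.eq_zero_or_pos
  · exact one_lt_card.2
      ⟨⟨0, by omega⟩, by simp [partIdx], ⟨1, by omega⟩, by simp [partIdx], by simp⟩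
  · refine one_lt_card.2 ⟨⟨2 * k + 2, by omega⟩, ?_, ⟨2 * k + 3, by omega⟩, ?_, by simp⟩ <;>
      grind [partIdx]

theorem three_le_card_partIdx_eq {d k : ℕ} (hd : 2 ≤ d) (hk : k < 2) :
    3 ≤ #{j : Fin (2 * d + 2) | partIdx j = k} := by
  refine two_lt_card.2 ⟨⟨3 * k, by omega⟩, ?_, ⟨3 * k + 1, by omega⟩, ?_, ⟨3 * k + 2, by omega⟩, ?_,
    by simp, by simp, by simp⟩ <;>
      grind [partIdx]

/-- Let `d ≥ 3` and let `v_1, …, v_{2d+2}` be points in general position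
in `ℝ^d` partitioned into parts `L_1 = {v_1,v_2,v_3}`, `L_2 = {v_4,v_5,v_6}` and
`L_k = {v_{2k+1}, v_{2k+2}}` for `3 ≤ k ≤ d`. Then there exist disjoint sets `U', W'` of
`d` vertices each, containing exactly one vertex of every part, whose convex hulls share
a common point of their relative (intrinsic) interiors: every `d`-dimensional rectilinear
drawing of `K_{2×3+(d-2)×2}^d` contains a crossing pair of hyperedges. -/
theorem exists_crossing_pair (d : ℕ) (hd : 3 ≤ d)
    (v : Fin (2 * d + 2) → EuclideanSpace ℝ (Fin d))
    (hinj : Function.Injective v)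
    (hgen : ∀ s : Finset (Fin (2 * d + 2)), s.card = d + 1 →
      AffineIndependent ℝ (fun i : s => v i.1)) :
    ∃ U' W' : Finset (Fin (2 * d + 2)), Disjoint U' W' ∧
      U'.card = d ∧ W'.card = d ∧
      (∀ i < d, (U'.filter fun j => partIdx j.val = i).card = 1) ∧
      (∀ i < d, (W'.filter fun j => partIdx j.val = i).card = 1) ∧
      (intrinsicInterior ℝ (convexHull ℝ (v '' (U' : Set (Fin (2 * d + 2))))) ∩
        intrinsicInterior ℝ
          (convexHull ℝ (v '' (W' : Set (Fin (2 * d + 2)))))).Nonempty := by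
  have hv : IsInGeneralPosition ℝ v :=
    isInGeneralPosition_of_card_eq (by simp; omega) (by simpa using hgen)
  obtain ⟨U, W, hUW, ⟨hU, hU1⟩, ⟨hW, hW1⟩, hcross⟩ :=
    exists_crossing_pair_general hv (c := fun j => partIdx j) (K := range d) (a := 0) (b := 1)
      (by simp) (mem_range.2 (by omega)) (mem_range.2 (by omega)) zero_ne_one
      (three_le_card_partIdx_eq (by omega) two_pos) (three_le_card_partIdx_eq (by omega) one_lt_two)
      fun k hk => two_le_card_partIdx_eq (mem_range.1 hk)
  simp only [card_range, mem_range] at hU hU1 hW hW1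
  exact ⟨U, W, hUW, hU, hW, hU1, hW1, hcross⟩
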